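/- arXiv:1307.7672 — 2 statements merged into one kernel-verified Lean document; each statement's English description precedes it below -/
import Mathlib

section
/- Let A be a finite-dimensional (left) Leibniz algebra over an algebraically closed field of characteristic zero. Then A is solvable if and only if tr(L_a ∘ L_b) = 0 for all a ∈ [A,A] and all b ∈ A. -/
/-- Span of all brackets `[u, v]` with `u ∈ p`, `v ∈ q`. -/
def bracketSpan {K A : Type*} [Field K] [AddCommGroup A] [Module K A]
    (br : A →ₗ[K] A →ₗ[K] A) (p q : Submodule K A) : Submodule K A :=
  Submodule.span K {x | ∃ a ∈ p, ∃ b ∈ q, br a b = x}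

/-- Derived series: `derSeries br 0 = A` and
`derSeries br (n+1) = [derSeries br n, derSeries br n]`; so `derSeries br n = A^(n+1)`.
The algebra is solvable iff some term vanishes. -/
def derSeries {K A : Type*} [Field K] [AddCommGroup A] [Module K A]
    (br : A →ₗ[K] A →ₗ[K] A) : ℕ → Submodule K A
  | 0 => ⊤
  | n + 1 => bracketSpan br (derSeries br n) (derSeries br n)

/-- Lower central series: `lcs br 0 = A` and `lcs br (n+1) = [A, lcs br n]`;
so `lcs br n = A^(n+1)`.  The algebra is nilpotent iff some term vanishes. -/
def lcs {K A : Type*} [Field K] [AddCommGroup A] [Module K A]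
    (br : A →ₗ[K] A →ₗ[K] A) : ℕ → Submodule K A
  | 0 => ⊤
  | n + 1 => bracketSpan br ⊤ (lcs br n)

/-!
The operators `L_a` form a Lie algebra `𝔤 ⊆ 𝔤𝔩(A)`, so `A` is a faithful `𝔤`-module, and the
kernel of `A → 𝔤` multiplies `A` to zero from the left. Hence `A` is solvable iff `𝔤` is, and the
claim is Cartan's criterion for a faithful `𝔤`-module `M`.

If `𝔤` is solvable, extend scalars to an algebraically closed field. Lie's theorem for the dual of a
submodule `N ≠ 0` of `M` yields a nonzero functional killing `[𝔤, 𝔤] N`, so `[𝔤, 𝔤] N ≠ N`.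
Therefore `[𝔤, 𝔤]` acts nilpotently on `M`, and `x y` is nilpotent for `x ∈ [𝔤, 𝔤]` and `y ∈ 𝔤`.
Conversely, if the trace form vanishes on `D = [𝔤, 𝔤]`, then `[D, D]` acts nilpotently on `M`; as
`M` is faithful, `[D, D]` is a nilpotent Lie algebra, so `𝔤` is solvable.
-/

open LieAlgebra LieModule TensorProduct

section NilpotentAction

variable {R L M : Type*} [CommRing R] [LieRing L] [LieAlgebra R L]
  [AddCommGroup M] [Module R M] [LieRingModule L M] [LieModule R L M]

theorem isSolvable_of_isSolvable_derivedSeries (n : ℕ) [IsSolvable (derivedSeries R L n)] :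
    IsSolvable L := by
  obtain ⟨k, hk⟩ := IsSolvable.solvable R (derivedSeries R L n)
  rw [LieIdeal.derivedSeries_eq_bot_iff, ← derivedSeriesOfIdeal_add] at hk
  exact IsSolvable.mk hk

theorem lie_mem_lowerCentralSeries_add {i j : ℕ} {x : L} {m : M}
    (hx : x ∈ lowerCentralSeries R L L i) (hm : m ∈ lowerCentralSeries R L M j) :
    ⁅x, m⁆ ∈ lowerCentralSeries R L M (i + j + 1) := by
  have lie_mem_succ {k : ℕ} (y : L) {n : M} (hn : n ∈ lowerCentralSeries R L M k) :
      ⁅y, n⁆ ∈ lowerCentralSeries R L M (k + 1) := by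
    rw [lowerCentralSeries_succ]
    exact LieSubmodule.lie_mem_lie (LieSubmodule.mem_top y) hn
  induction i generalizing j x m with
  | zero => simpa only [zero_add] using lie_mem_succ x hm
  | succ i ih =>
    rw [lowerCentralSeries_succ, ← LieSubmodule.mem_toSubmodule,
      LieSubmodule.lieIdeal_oper_eq_linear_span'] at hx
    induction hx using Submodule.span_induction with
    | mem x hx =>
      obtain ⟨y, -, z, hz, rfl⟩ := hx
      rw [lie_lie]
      refine sub_mem ?_ ?_
      · convert lie_mem_succ y (ih hz hm) using 2
        ring
      · convert ih hz (lie_mem_succ y hm) using 2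
        ring
    | zero => simp
    | add x y _ _ hx hy => simpa using add_mem hx hy
    | smul c x _ hx => simpa using SMulMemClass.smul_mem c hx

variable (R L M) in
theorem lieRing_isNilpotent_of_isFaithful_of_isNilpotent [IsFaithful R L M] [IsNilpotent L M] :
    LieRing.IsNilpotent L := by
  obtain ⟨k, hk⟩ := IsNilpotent.nilpotent R L M
  refine LieModule.IsNilpotent.mk (R := R) L (k := k) ?_
  refine (LieSubmodule.eq_bot_iff _).mpr fun x hx ↦ ?_
  refine (isFaithful_iff' R L M).mp inferInstance x fun m ↦ ?_
  have hxm : ⁅x, m⁆ ∈ lowerCentralSeries R L M (k + 0 + 1) :=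
    lie_mem_lowerCentralSeries_add (j := 0) hx (LieSubmodule.mem_top m)
  have hle : lowerCentralSeries R L M (k + 0 + 1) ≤ ⊥ :=
    hk ▸ antitone_lowerCentralSeries R L M (Nat.le_succ k)
  exact hle hxm

instance isFaithful_lieIdeal [IsFaithful R L M] (I : LieIdeal R L) : IsFaithful R I M :=
  inferInstanceAs (IsFaithful R (I : LieSubalgebra R L) M)

theorem lie_eq_zero_of_mem_weightSpace {χ : L → R} {m : M} (hm : m ∈ weightSpace M χ)
    {x : L} (hx : x ∈ derivedSeries R L 1) : ⁅x, m⁆ = 0 := by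
  rw [mem_weightSpace] at hm
  rw [← LieSubmodule.mem_toSubmodule, derivedSeries_def, derivedSeriesOfIdeal_succ,
    LieSubmodule.lieIdeal_oper_eq_linear_span'] at hx
  induction hx using Submodule.span_induction with
  | mem x hx =>
    obtain ⟨y, -, z, -, rfl⟩ := hx
    rw [lie_lie, hm z, hm y, lie_smul, lie_smul, hm y, hm z, smul_comm, sub_self]
  | zero => exact zero_lie m
  | add x y _ _ hx hy => rw [add_lie, hx, hy, add_zero]
  | smul c x _ hx => rw [smul_lie, hx, smul_zero]

theorem isNilpotent_of_forall_lie_eq_self [IsArtinian R M] (I : LieIdeal R L)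
    (h : ∀ N : LieSubmodule R L M, ⁅I, N⁆ = N → N = ⊥) : IsNilpotent I M := by
  have lcs_antitone : Antitone (I.lcs M) :=
    antitone_nat_of_succ_le fun k ↦ by
      rw [LieIdeal.lcs_succ]
      exact LieSubmodule.lie_le_right _ _
  have : WellFoundedGT (LieSubmodule R L M)ᵒᵈ := LieSubmodule.wellFoundedLT_of_isArtinian R L M
  obtain ⟨k, hk⟩ := WellFoundedGT.monotone_chain_condition
    (⟨I.lcs M, lcs_antitone⟩ : ℕ →o (LieSubmodule R L M)ᵒᵈ)
  have lcs_eq_bot : I.lcs M k = ⊥ :=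
    h _ ((LieIdeal.lcs_succ I M k).symm.trans (hk (k + 1) k.le_succ).symm)
  refine LieModule.IsNilpotent.mk (R := R) M (k := k) ?_
  rw [← LieSubmodule.toSubmodule_inj, ← LieIdeal.coe_lcs_eq, lcs_eq_bot]
  rfl

theorem isNilpotent_toEnd_comp_toEnd_of_mem_lieIdeal (I : LieIdeal R L) [IsNilpotent I M]
    {x : L} (hx : x ∈ I) (y : L) : _root_.IsNilpotent (toEnd R L M x ∘ₗ toEnd R L M y) := by
  have pow_mem (m : M) (k : ℕ) : ((toEnd R L M x ∘ₗ toEnd R L M y) ^ k) m ∈ I.lcs M k := by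
    induction k with
    | zero => simp
    | succ k ih =>
      rw [pow_succ', LieIdeal.lcs_succ]
      exact LieSubmodule.lie_mem_lie hx ((I.lcs M k).lie_mem ih)
  obtain ⟨k, hk⟩ := IsNilpotent.nilpotent R I M
  refine ⟨k, LinearMap.ext fun m ↦ ?_⟩
  have hm := pow_mem m k
  rwa [← LieSubmodule.mem_toSubmodule, LieIdeal.coe_lcs_eq, hk] at hm

theorem traceForm_eq_zero_of_mem_lieIdeal_of_isNilpotent [IsReduced R]
    (I : LieIdeal R L) [IsNilpotent I M] {x : L} (hx : x ∈ I) (y : L) :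
    traceForm R L M x y = 0 :=
  (LinearMap.isNilpotent_trace_of_isNilpotent
    (isNilpotent_toEnd_comp_toEnd_of_mem_lieIdeal I hx y)).eq_zero

end NilpotentAction

section CartanCriterion

theorem eq_bot_of_lie_derivedSeries_eq_self {K L M : Type*} [Field K] [IsAlgClosed K] [CharZero K]
    [LieRing L] [LieAlgebra K L] [IsSolvable L] [AddCommGroup M] [Module K M]
    [FiniteDimensional K M] [LieRingModule L M] [LieModule K L M] {N : LieSubmodule K L M}
    (hN : ⁅derivedSeries K L 1, N⁆ = N) : N = ⊥ := by
  by_contra hbot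
  have : Nontrivial N := (LieSubmodule.nontrivial_iff_ne_bot K L M).mpr hbot
  obtain ⟨χ, hχ⟩ := exists_nontrivial_weightSpace_of_isSolvable K L (Module.Dual K N)
  obtain ⟨⟨φ, hφ⟩, hφ_ne⟩ := exists_ne (0 : weightSpace (Module.Dual K N) χ)
  have apply_lie_eq_zero {x : L} (hx : x ∈ derivedSeries K L 1) (n : N) : φ ⁅x, n⁆ = 0 := by
    rw [← neg_eq_zero, ← Module.Dual.lie_apply, lie_eq_zero_of_mem_weightSpace hφ hx,
      LinearMap.zero_apply]
  have le_map_ker : N.toSubmodule ≤ (LinearMap.ker φ).map N.toSubmodule.subtype := by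
    conv_lhs => rw [← hN, LieSubmodule.lieIdeal_oper_eq_linear_span']
    rw [Submodule.span_le]
    rintro _ ⟨x, hx, n, hn, rfl⟩
    exact ⟨(⁅x, (⟨n, hn⟩ : N)⁆ : N), apply_lie_eq_zero hx ⟨n, hn⟩, rfl⟩
  refine hφ_ne (Subtype.ext (LinearMap.ext fun n ↦ ?_))
  obtain ⟨n', hn', hn'_eq⟩ := le_map_ker n.2
  rwa [Subtype.ext hn'_eq] at hn'

variable {R L M : Type*} [CommRing R] [CharZero R] [IsDomain R] [LieRing L] [LieAlgebra R L]
  [AddCommGroup M] [Module R M] [IsNoetherian R M] [Module.Free R M]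
  [LieRingModule L M] [LieModule R L M]

theorem traceForm_eq_zero_of_mem_derivedSeries [IsSolvable L] {x : L}
    (hx : x ∈ derivedSeries R L 1) (y : L) : traceForm R L M x y = 0 := by
  let K := AlgebraicClosure (FractionRing R)
  have : FaithfulSMul R K := FaithfulSMul.trans R (FractionRing R) K
  have : IsNilpotent (derivedSeries K (K ⊗[R] L) 1) (K ⊗[R] M) :=
    isNilpotent_of_forall_lie_eq_self (R := K) _ fun _ ↦ eq_bot_of_lie_derivedSeries_eq_self
  have hx_baseChange : 1 ⊗ₜ[R] x ∈ derivedSeries K (K ⊗[R] L) 1 := by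
    rw [derivedSeries_baseChange]
    exact LieSubmodule.tmul_mem_baseChange_of_mem 1 hx
  have traceForm_tmul : traceForm K (K ⊗[R] L) (K ⊗[R] M) (1 ⊗ₜ x) (1 ⊗ₜ y) = 0 :=
    traceForm_eq_zero_of_mem_lieIdeal_of_isNilpotent _ hx_baseChange _
  simpa using traceForm_tmul

theorem isSolvable_of_traceForm_eq_zero [IsFaithful R L M]
    (h : ∀ x ∈ derivedSeries R L 1, ∀ y ∈ derivedSeries R L 1, traceForm R L M x y = 0) :
    IsSolvable L := by
  let D := derivedSeries R L 1
  have traceForm_derived : traceForm R D M = 0 := by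
    ext ⟨x, hx⟩ ⟨y, hy⟩
    exact h x hx y hy
  have : IsNilpotent (derivedSeries R D 1) M :=
    isNilpotent_derivedSeries_of_traceForm_eq_zero traceForm_derived
  have : LieRing.IsNilpotent (derivedSeries R D 1) :=
    lieRing_isNilpotent_of_isFaithful_of_isNilpotent R _ M
  have : IsSolvable D := isSolvable_of_isSolvable_derivedSeries (R := R) 1
  exact isSolvable_of_isSolvable_derivedSeries (R := R) 1

variable (R L M) in
theorem isSolvable_iff_traceForm_eq_zero [IsFaithful R L M] :
    IsSolvable L ↔ ∀ x ∈ derivedSeries R L 1, ∀ y, traceForm R L M x y = 0 :=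
  ⟨fun _ _ hx y ↦ traceForm_eq_zero_of_mem_derivedSeries hx y,
    fun h ↦ isSolvable_of_traceForm_eq_zero (M := M) fun x hx y _ ↦ h x hx y⟩

end CartanCriterion

section Leibniz

attribute [local instance] LieRing.ofAssociativeRing

variable {K A : Type*} [Field K] [AddCommGroup A] [Module K A] {br : A →ₗ[K] A →ₗ[K] A}

theorem bracketSpan_eq_bot_of_le_ker {p q : Submodule K A} (hp : p ≤ LinearMap.ker br) :
    bracketSpan br p q = ⊥ := by
  rw [bracketSpan, Submodule.span_eq_bot]
  rintro _ ⟨a, ha, b, -, rfl⟩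
  rw [LinearMap.mem_ker.mp (hp ha), LinearMap.zero_apply]

/-- The left Leibniz identity for the multiplication `br`: each `br a` is a derivation of `br`. -/
def IsLeftLeibniz (br : A →ₗ[K] A →ₗ[K] A) : Prop :=
  ∀ a b c : A, br a (br b c) = br (br a b) c + br b (br a c)

namespace IsLeftLeibniz

theorem apply_bracket (h : IsLeftLeibniz br) (a b : A) :
    br (br a b) = ⁅(br a : Module.End K A), (br b : Module.End K A)⁆ :=
  LinearMap.ext fun c ↦ eq_sub_of_add_eq (h a b c).symm

/-- The Lie algebra of left multiplication operators of a left Leibniz algebra, as a subalgebra of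
the endomorphisms of the underlying vector space. -/
def leftMulLieSubalgebra (h : IsLeftLeibniz br) : LieSubalgebra K (Module.End K A) where
  toSubmodule := LinearMap.range br
  lie_mem' := by
    rintro _ _ ⟨a, rfl⟩ ⟨b, rfl⟩
    exact ⟨br a b, h.apply_bracket a b⟩

/-- The quotient map `a ↦ L_a` from a left Leibniz algebra onto the Lie algebra of its left
multiplication operators. -/
def leftMul (h : IsLeftLeibniz br) : A →ₗ[K] h.leftMulLieSubalgebra :=
  br.rangeRestrict

theorem leftMul_surjective (h : IsLeftLeibniz br) : Function.Surjective h.leftMul :=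
  br.surjective_rangeRestrict

theorem ker_leftMul (h : IsLeftLeibniz br) : LinearMap.ker h.leftMul = LinearMap.ker br :=
  br.ker_rangeRestrict

theorem leftMul_bracket (h : IsLeftLeibniz br) (a b : A) :
    h.leftMul (br a b) = ⁅h.leftMul a, h.leftMul b⁆ :=
  Subtype.ext (h.apply_bracket a b)

theorem map_leftMul_bracketSpan (h : IsLeftLeibniz br) {p q : Submodule K A}
    {I J : LieIdeal K h.leftMulLieSubalgebra} (hp : p.map h.leftMul = I.toSubmodule)
    (hq : q.map h.leftMul = J.toSubmodule) :
    (bracketSpan br p q).map h.leftMul = ⁅I, J⁆.toSubmodule := by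
  rw [bracketSpan, Submodule.map_span, LieSubmodule.lieIdeal_oper_eq_linear_span']
  congr 1
  ext z
  simp only [← LieSubmodule.mem_toSubmodule, ← hp, ← hq, Submodule.mem_map]
  constructor
  · rintro ⟨_, ⟨a, ha, b, hb, rfl⟩, rfl⟩
    exact ⟨_, ⟨a, ha, rfl⟩, _, ⟨b, hb, rfl⟩, (h.leftMul_bracket a b).symm⟩
  · rintro ⟨_, ⟨a, ha, rfl⟩, _, ⟨b, hb, rfl⟩, rfl⟩
    exact ⟨br a b, ⟨a, ha, b, hb, rfl⟩, h.leftMul_bracket a b⟩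

theorem map_leftMul_derSeries (h : IsLeftLeibniz br) (n : ℕ) :
    (derSeries br n).map h.leftMul =
      (derivedSeries K h.leftMulLieSubalgebra n).toSubmodule := by
  induction n with
  | zero => exact (Submodule.map_top _).trans (LinearMap.range_eq_top.mpr h.leftMul_surjective)
  | succ n ih =>
    rw [derSeries, derivedSeries_def, derivedSeriesOfIdeal_succ]
    exact h.map_leftMul_bracketSpan ih ih

theorem exists_derSeries_eq_bot_iff_isSolvable (h : IsLeftLeibniz br) :
    (∃ m, derSeries br m = ⊥) ↔ IsSolvable h.leftMulLieSubalgebra := by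
  rw [isSolvable_iff K]
  refine ⟨fun ⟨m, hm⟩ ↦ ⟨m, ?_⟩, fun ⟨m, hm⟩ ↦ ⟨m + 1, ?_⟩⟩
  · rw [← LieSubmodule.toSubmodule_eq_bot, ← h.map_leftMul_derSeries, hm, Submodule.map_bot]
  · refine bracketSpan_eq_bot_of_le_ker ?_
    rw [← h.ker_leftMul, LinearMap.le_ker_iff_map, h.map_leftMul_derSeries, hm,
      LieSubmodule.bot_toSubmodule]

theorem traceForm_leftMul (h : IsLeftLeibniz br) (a b : A) :
    traceForm K h.leftMulLieSubalgebra A (h.leftMul a) (h.leftMul b) =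
      LinearMap.trace K A (br a ∘ₗ br b) :=
  rfl

theorem forall_derivedSeries_traceForm_eq_zero_iff (h : IsLeftLeibniz br) :
    (∀ x ∈ derivedSeries K h.leftMulLieSubalgebra 1, ∀ y,
        traceForm K h.leftMulLieSubalgebra A x y = 0) ↔
      ∀ a ∈ bracketSpan br ⊤ ⊤, ∀ b, LinearMap.trace K A (br a ∘ₗ br b) = 0 := by
  simp only [← LieSubmodule.mem_toSubmodule, ← h.map_leftMul_derSeries, Submodule.mem_map,
    forall_exists_index, and_imp, forall_apply_eq_imp_iff₂, h.leftMul_surjective.forall,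
    h.traceForm_leftMul, derSeries]

end IsLeftLeibniz

end Leibniz

theorem leibniz_cartan_criterion_general
    {K A : Type*} [Field K] [CharZero K]
    [AddCommGroup A] [Module K A] [FiniteDimensional K A]
    (br : A →ₗ[K] A →ₗ[K] A)
    (leibniz : ∀ a b c : A, br a (br b c) = br (br a b) c + br b (br a c)) :
    (∃ m : ℕ, derSeries br m = ⊥) ↔
      ∀ a ∈ bracketSpan br (⊤ : Submodule K A) ⊤, ∀ b : A,
        LinearMap.trace K A (br a ∘ₗ br b) = 0 := by
  have h : IsLeftLeibniz br := leibniz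
  rw [h.exists_derSeries_eq_bot_iff_isSolvable, isSolvable_iff_traceForm_eq_zero K _ A,
    h.forall_derivedSeries_traceForm_eq_zero_iff]

/-- Cartan's criterion: a finite-dimensional (left) Leibniz algebra
over an algebraically closed field of characteristic zero is solvable iff
`tr(L_a ∘ L_b) = 0` for all `a ∈ [A, A]` and all `b ∈ A`. -/
theorem leibniz_cartan_criterion
    {K A : Type*} [Field K] [IsAlgClosed K] [CharZero K]
    [AddCommGroup A] [Module K A] [FiniteDimensional K A]
    (br : A →ₗ[K] A →ₗ[K] A)
    (leibniz : ∀ a b c : A, br a (br b c) = br (br a b) c + br b (br a c)) :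
    (∃ m : ℕ, derSeries br m = ⊥) ↔
      ∀ a ∈ bracketSpan br (⊤ : Submodule K A) ⊤, ∀ b : A,
        LinearMap.trace K A (br a ∘ₗ br b) = 0 :=
  leibniz_cartan_criterion_general br leibniz
end

section
/- Let A be a finite-dimensional (left) Leibniz algebra over a field and let L be a Lie subset of A that spans A. Suppose that the left multiplication operator L_a is nilpotent for all a ∈ L. Then A is a nilpotent Leibniz algebra. -/
/-!
Left multiplications satisfy `⁅L_a, L_b⁆ = L_[a,b]`, so `L` yields a set `S` of nilpotent operators
closed under commutators, and `S` spans the Lie algebra `𝔤` of left multiplications. Among the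
subalgebras of `𝔤` that act nilpotently on `A` and are generated by a subset of `S`, choose a
maximal one, `H`, and suppose `S ⊈ H`. Since `H` also acts nilpotently on `𝔤`, bracketing an element
of `S` outside `H` repeatedly with generators of `H` eventually lands in `H`; so some element of `S`
outside `H` has all its brackets with generators in `H`, that is, it normalizes `H`. Adjoining it to
`H` preserves nilpotency, against maximality. Hence `H = 𝔤`, and the lower central series of `A` is
contained in that of the `𝔤`-module `A`.
-/

section LieSets

open LieSubalgebra LieModule

variable {R 𝔤 : Type*} [CommRing R] [LieRing 𝔤] [LieAlgebra R 𝔤]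

theorem mem_normalizer_lieSpan {T : Set 𝔤} {x : 𝔤} (hx : ∀ t ∈ T, ⁅t, x⁆ ∈ lieSpan R 𝔤 T) :
    x ∈ (lieSpan R 𝔤 T).normalizer := by
  rw [mem_normalizer_iff']
  intro y hy
  induction hy using lieSpan_induction with
  | mem t ht => exact hx t ht
  | zero => simp
  | add y z _ _ hy hz => simpa only [add_lie] using add_mem hy hz
  | smul c y _ hy => simpa only [smul_lie] using (lieSpan R 𝔤 T).smul_mem c hy
  | lie y z hyT hzT hy hz =>
    rw [lie_lie]
    exact sub_mem (lie_mem _ hyT hz) (lie_mem _ hzT hy)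

theorem toSubmodule_lieSpan_insert {T : Set 𝔤} {x : 𝔤} (hx : x ∈ (lieSpan R 𝔤 T).normalizer) :
    (lieSpan R 𝔤 (insert x T)).toSubmodule =
      Submodule.span R {x} ⊔ (lieSpan R 𝔤 T).toSubmodule := by
  let K : LieSubalgebra R 𝔤 :=
    { Submodule.span R {x} ⊔ (lieSpan R 𝔤 T).toSubmodule with
      lie_mem' := lie_mem_sup_of_mem_normalizer hx }
  apply le_antisymm
  · have hK : lieSpan R 𝔤 (insert x T) ≤ K := lieSpan_le.mpr <| Set.insert_subset
      (Submodule.mem_sup_left <| Submodule.mem_span_singleton_self x)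
      fun t ht => Submodule.mem_sup_right (subset_lieSpan ht)
    exact hK
  · rw [sup_le_iff, Submodule.span_singleton_le_iff_mem]
    exact ⟨subset_lieSpan (Set.mem_insert x T), lieSpan_mono (Set.subset_insert x T)⟩

theorem isNilpotent_lieSpan_insert {M : Type*} [AddCommGroup M] [Module R M] [LieRingModule 𝔤 M]
    [LieModule R 𝔤 M] {T : Set 𝔤} [IsNilpotent (lieSpan R 𝔤 T) M] {x : 𝔤}
    (hx : x ∈ (lieSpan R 𝔤 T).normalizer) (hnil : _root_.IsNilpotent (toEnd R 𝔤 M x)) :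
    IsNilpotent (lieSpan R 𝔤 (insert x T)) M := by
  set H := lieSpan R 𝔤 T
  set K := lieSpan R 𝔤 (insert x T)
  have hHK : H ≤ K := lieSpan_mono (Set.subset_insert x T)
  have hKN : K ≤ H.normalizer :=
    lieSpan_le.mpr <| Set.insert_subset hx (subset_lieSpan.trans H.le_normalizer)
  have hxK : x ∈ K := subset_lieSpan (Set.mem_insert x T)
  obtain ⟨I, hI : (I : LieSubalgebra R K) = ofLe hHK⟩ :=
    exists_nested_lieIdeal_ofLe_normalizer hHK hKN
  have hsup : Submodule.span R {(⟨x, hxK⟩ : K)} ⊔ I.toSubmodule = ⊤ := by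
    refine eq_top_iff.mpr fun z _ => ?_
    have hz : (z : 𝔤) ∈ Submodule.span R {x} ⊔ H.toSubmodule :=
      toSubmodule_lieSpan_insert hx ▸ z.2
    obtain ⟨_, hcx, y, hy, hxy⟩ := Submodule.mem_sup.mp hz
    obtain ⟨c, rfl⟩ := Submodule.mem_span_singleton.mp hcx
    have hyI : (⟨y, hHK hy⟩ : K) ∈ (I : LieSubalgebra R K) := hI ▸ (mem_ofLe hHK _).mpr hy
    exact Submodule.mem_sup.mpr ⟨_, Submodule.smul_mem _ c (Submodule.mem_span_singleton_self _),
      _, hyI, Subtype.ext hxy⟩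
  have hInil : IsNilpotent I M := by
    let e : H ≃ₗ⁅R⁆ I := (equivOfLe hHK).trans (LieEquiv.ofEq _ _ (congrArg SetLike.coe hI.symm))
    exact e.surjective.lieModuleIsNilpotent (g := LinearMap.id) (fun _ _ => rfl)
      Function.surjective_id
  exact LieSubmodule.isNilpotentOfIsNilpotentSpanSupEqTop hsup hnil hInil

theorem exists_mem_normalizer_lieSpan_notMem {S T : Set 𝔤} [IsNilpotent (lieSpan R 𝔤 T) 𝔤]
    (hTS : ∀ t ∈ T, ∀ s ∈ S, ⁅t, s⁆ ∈ S) (hS : ¬S ⊆ lieSpan R 𝔤 T) :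
    ∃ s ∈ S, s ∉ lieSpan R 𝔤 T ∧ s ∈ (lieSpan R 𝔤 T).normalizer := by
  set H := lieSpan R 𝔤 T
  have hex : ∃ n, S ∩ lowerCentralSeries R H 𝔤 n ⊆ H := by
    obtain ⟨k, hk⟩ := IsNilpotent.nilpotent R H 𝔤
    refine ⟨k, fun s hs => ?_⟩
    have hs0 : s = 0 := by simpa [hk] using hs.2
    exact hs0 ▸ H.zero_mem
  classical
  obtain ⟨n, hn⟩ : ∃ n, Nat.find hex = n + 1 :=
    Nat.exists_eq_succ_of_ne_zero fun h0 => hS <| by simpa using (Nat.find_eq_zero hex).mp h0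
  obtain ⟨s, ⟨hsS, hsn⟩, hsH⟩ := Set.not_subset.mp (Nat.find_min hex (m := n) (by omega))
  refine ⟨s, hsS, hsH, mem_normalizer_lieSpan fun t ht => ?_⟩
  have hlie : ⁅t, s⁆ ∈ lowerCentralSeries R H 𝔤 (n + 1) := by
    rw [lowerCentralSeries_succ]
    exact LieSubmodule.lie_mem_lie (x := (⟨t, subset_lieSpan ht⟩ : H)) (LieSubmodule.mem_top _) hsn
  exact Nat.find_spec hex ⟨hTS t ht s hsS, hn ▸ hlie⟩

end LieSets

section JacobsonEngel

open LieSubalgebra LieModule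

attribute [local instance] LieRing.ofAssociativeRing

variable {R M : Type*} [CommRing R] [AddCommGroup M] [Module R M]
  {𝔤 : LieSubalgebra R (Module.End R M)} [IsNoetherian R 𝔤]

theorem isNilpotent_adjoint_of_isNilpotent (H : LieSubalgebra R 𝔤) [IsNilpotent H M] :
    IsNilpotent H 𝔤 := by
  rw [isNilpotent_iff_forall' (R := R)]
  intro x
  exact LieAlgebra.isNilpotent_ad_of_isNilpotent (isNilpotent_toEnd_of_isNilpotent R H M x)

theorem isNilpotent_lieSpan_of_forall_isNilpotent {S : Set 𝔤} (hS : ∀ a ∈ S, ∀ b ∈ S, ⁅a, b⁆ ∈ S)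
    (hnil : ∀ a ∈ S, _root_.IsNilpotent (a : Module.End R M)) :
    IsNilpotent (lieSpan R 𝔤 S) M := by
  let P : Set (Set 𝔤) := {T | T ⊆ S ∧ IsNilpotent (lieSpan R 𝔤 T) M}
  have hP : P.Nonempty := by
    refine ⟨∅, Set.empty_subset S, ?_⟩
    rw [LieSubalgebra.span_empty]
    have := LieSubalgebra.subsingleton_bot (R := R) (L := 𝔤)
    have : IsTrivial (⊥ : LieSubalgebra R 𝔤) M :=
      ⟨fun x m => by rw [Subsingleton.elim x 0, zero_lie]⟩
    infer_instance
  obtain ⟨T, ⟨hTS, hT⟩, hmax⟩ :=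
    (InvImage.wf (lieSpan R 𝔤) (wellFounded_gt (α := LieSubalgebra R 𝔤))).has_min P hP
  have := isNilpotent_adjoint_of_isNilpotent (lieSpan R 𝔤 T)
  have hST : S ⊆ lieSpan R 𝔤 T := by
    by_contra hST
    obtain ⟨s, hsS, hsT, hs⟩ :=
      exists_mem_normalizer_lieSpan_notMem (fun t ht => hS t (hTS ht)) hST
    have hsP : insert s T ∈ P :=
      ⟨Set.insert_subset hsS hTS, isNilpotent_lieSpan_insert hs (hnil s hsS)⟩
    refine hmax _ hsP (lt_of_le_of_ne (lieSpan_mono (Set.subset_insert s T)) fun h => hsT ?_)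
    exact h ▸ subset_lieSpan (Set.mem_insert s T)
  rwa [le_antisymm (lieSpan_le.mpr hST) (lieSpan_mono hTS)]

end JacobsonEngel

section Leibniz

attribute [local instance] LieRing.ofAssociativeRing

variable {K A : Type*} [Field K] [AddCommGroup A] [Module K A] {br : A →ₗ[K] A →ₗ[K] A}

theorem lcs_le_lowerCentralSeries {𝔤 : LieSubalgebra K (Module.End K A)} (h𝔤 : ∀ a, br a ∈ 𝔤)
    (n : ℕ) : lcs br n ≤ (LieModule.lowerCentralSeries K 𝔤 A n).toSubmodule := by
  induction n with
  | zero => simp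
  | succ n ih =>
    rw [lcs, bracketSpan, Submodule.span_le, LieModule.lowerCentralSeries_succ]
    rintro _ ⟨a, -, b, hb, rfl⟩
    exact LieSubmodule.lie_mem_lie (x := (⟨br a, h𝔤 a⟩ : 𝔤)) (LieSubmodule.mem_top _) (ih hb)

theorem exists_lcs_eq_bot_of_isNilpotent {𝔤 : LieSubalgebra K (Module.End K A)}
    (h𝔤 : ∀ a, br a ∈ 𝔤) [LieModule.IsNilpotent 𝔤 A] : ∃ m, lcs br m = ⊥ := by
  obtain ⟨m, hm⟩ := LieModule.IsNilpotent.nilpotent K 𝔤 A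
  exact ⟨m, by simpa [hm] using lcs_le_lowerCentralSeries h𝔤 m⟩

variable (leibniz : ∀ a b c : A, br a (br b c) = br (br a b) c + br b (br a c))
include leibniz

theorem lie_leftMul (a b : A) : (⁅br a, br b⁆ : Module.End K A) = br (br a b) := by
  ext c
  simp [LieRing.of_associative_ring_bracket, leibniz a b c]

/-- The Lie algebra of left multiplications of the Leibniz algebra with bracket `br`, as a
subalgebra of `Module.End K A`. -/
def leftMulLieSubalgebra : LieSubalgebra K (Module.End K A) :=
  { LinearMap.range br with
    lie_mem' := by
      rintro _ _ ⟨a, rfl⟩ ⟨b, rfl⟩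
      exact ⟨br a b, (lie_leftMul leibniz a b).symm⟩ }

theorem isNilpotent_leftMulLieSubalgebra [FiniteDimensional K (LinearMap.range br)] {L : Set A}
    (hLclosed : ∀ a ∈ L, ∀ b ∈ L, br a b ∈ L) (hLspan : Submodule.span K L = ⊤)
    (hnil : ∀ a ∈ L, IsNilpotent (br a)) :
    LieModule.IsNilpotent (leftMulLieSubalgebra leibniz) A := by
  let 𝔤 := leftMulLieSubalgebra leibniz
  have : IsNoetherian K 𝔤 := inferInstanceAs (IsNoetherian K (LinearMap.range br))
  let leftMul : A →ₗ[K] 𝔤 := br.rangeRestrict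
  have hclosed : ∀ x ∈ leftMul '' L, ∀ y ∈ leftMul '' L, ⁅x, y⁆ ∈ leftMul '' L := by
    rintro _ ⟨a, ha, rfl⟩ _ ⟨b, hb, rfl⟩
    exact ⟨br a b, hLclosed a ha b hb, Subtype.ext (lie_leftMul leibniz a b).symm⟩
  have hspan : Submodule.span K (leftMul '' L) = ⊤ := by
    rw [Submodule.span_image, hLspan, Submodule.map_top]
    exact br.range_rangeRestrict
  have hlieSpan : LieSubalgebra.lieSpan K 𝔤 (leftMul '' L) = ⊤ := by
    rw [← LieSubalgebra.toSubmodule_eq_top, eq_top_iff, ← hspan]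
    exact LieSubalgebra.submodule_span_le_lieSpan
  rw [← LieModule.isNilpotent_of_top_iff (R := K), ← hlieSpan]
  exact isNilpotent_lieSpan_of_forall_isNilpotent hclosed (Set.forall_mem_image.mpr hnil)

theorem leibniz_engel_lie_subset_general [FiniteDimensional K (LinearMap.range br)] (L : Set A)
    (hLclosed : ∀ a ∈ L, ∀ b ∈ L, br a b ∈ L) (hLspan : Submodule.span K L = ⊤)
    (hnil : ∀ a ∈ L, IsNilpotent (br a)) :
    ∃ m : ℕ, lcs br m = ⊥ :=
  have := isNilpotent_leftMulLieSubalgebra leibniz hLclosed hLspan hnil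
  exists_lcs_eq_bot_of_isNilpotent (𝔤 := leftMulLieSubalgebra leibniz) fun a => ⟨a, rfl⟩

end Leibniz

/-- if a Lie subset `L` spanning a finite-dimensional (left) Leibniz
algebra `A` consists of elements with nilpotent left multiplication operator, then
`A` is nilpotent. -/
theorem leibniz_engel_lie_subset
    {K A : Type*} [Field K]
    [AddCommGroup A] [Module K A] [FiniteDimensional K A]
    (br : A →ₗ[K] A →ₗ[K] A)
    (leibniz : ∀ a b c : A, br a (br b c) = br (br a b) c + br b (br a c))
    (L : Set A)
    (hLclosed : ∀ a ∈ L, ∀ b ∈ L, br a b ∈ L)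
    (hLspan : Submodule.span K L = ⊤)
    (hnil : ∀ a ∈ L, IsNilpotent (br a)) :
    ∃ m : ℕ, lcs br m = ⊥ :=
  leibniz_engel_lie_subset_general leibniz L hLclosed hLspan hnil
end
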